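/- Let n ≥ 1 and M > n. There exist a constant c > 0 and a sequence of centered probability measures dμ_k = f_k dγ on ℝⁿ with m_2(μ_k) ≤ M such that lim_{k→∞} δ_Tal(μ_k) = 0 and lim_{k→∞} W_2(μ_k, γ) = c > 0. -/

import Mathlib

/-!
Let `γ_w` be the translate of `γ` by `w`. The measures are the mixtures
`μ = (1-ε)γ + (ε/2)(γ_v + γ_{-v})` with `ε → 0` and `ε|v|² = c² = M - n` fixed: a vanishing mass is
sent to infinity at constant cost. They are centered, with second moment `n + ε|v|² = M`.
Both `2H(μ)` and `W₂²(μ,γ)` tend to `c²`, which gives the theorem.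

* Entropy (`relEnt_mixDens_bounds`). `H(μ) ≤ ε|v|²/2` by convexity of `t log t`. Conversely, bounding
  `log f` below on each component by the logarithm of its weighted density gives
  `H(μ) ≥ (1-ε)log(1-ε) + ε log(ε/2) + ε|v|²/2`, and the first two terms vanish in the limit.
* Upper bound on the distance (`costSq_mixDens_le`). Leaving the central component in place and
  translating the two others back is a coupling with cost `ε|v|²`.
* Lower bound on the distance (`costSq_mixDens_ge`). For a 1-Lipschitz `S`, any coupling has cost at
  least `(1-d)∫S² dμ - (1/d)∫S² dγ`. Apply this to `S(x) = (|⟨e,x⟩| - R)₊` with `v = a e`, `|e| = 1`: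
  the first integral is at least `ε(a-R)²`, the second at most `∫|x|⁴ dγ / R²`. With
  `ε = N⁻⁴`, `a = cN²`, `R = cN`, `d = 1/N` the bound tends to `c²`.
-/

open MeasureTheory Filter Real Topology

noncomputable section

/-- Euclidean space `ℝⁿ`. -/
abbrev En (n : ℕ) := EuclideanSpace ℝ (Fin n)

/-- The standard Gaussian measure `dγ = (2π)^{-n/2} e^{-|x|²/2} dx` on `ℝⁿ`. -/
def stdGauss (n : ℕ) : Measure (En n) :=
  (volume : Measure (En n)).withDensity
    (fun x => ENNReal.ofReal ((2 * π) ^ (-(n : ℝ) / 2) * Real.exp (-‖x‖ ^ 2 / 2)))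

/-- The probability measure `dμ = f dγ` with density `f` with respect to the Gaussian. -/
def densMeasure {n : ℕ} (f : En n → ℝ) : Measure (En n) :=
  (stdGauss n).withDensity (fun x => ENNReal.ofReal (f x))

/-- Relative entropy `H(μ) = ∫ f log f dγ` of `dμ = f dγ`. -/
def relEnt {n : ℕ} (f : En n → ℝ) : ℝ :=
  ∫ x, f x * Real.log (f x) ∂(stdGauss n)

/-- Fisher information `I(μ) = ∫ |∇f|²/f dγ` of `dμ = f dγ`. -/
def fisherInfo {n : ℕ} (f : En n → ℝ) : ℝ :=
  ∫ x, ‖gradient f x‖ ^ 2 / f x ∂(stdGauss n)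

/-- Deficit of the logarithmic Sobolev inequality, `δ(μ) = I(μ)/2 − H(μ)`. -/
def lsiDeficit {n : ℕ} (f : En n → ℝ) : ℝ :=
  fisherInfo f / 2 - relEnt f

/-- The `p`-th moment `m_p(μ) = ∫ |x|^p dμ`. -/
def moment {n : ℕ} (p : ℝ) (μ : Measure (En n)) : ℝ := ∫ x, ‖x‖ ^ p ∂μ

/-- A measure is centered if `∫ x dμ = 0`. -/
def IsCentered {n : ℕ} (μ : Measure (En n)) : Prop := (∫ x, x ∂μ) = 0

/-- `π'` is a coupling of `μ` and `ν`. -/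
def IsCoupling {n : ℕ} (π' : Measure (En n × En n)) (μ ν : Measure (En n)) : Prop :=
  IsProbabilityMeasure π' ∧ π'.map Prod.fst = μ ∧ π'.map Prod.snd = ν

/-- Wasserstein distance of order `p`:
`W_p(μ,ν) = inf_π (∫∫ |x−y|^p dπ)^{1/p}` over couplings `π`. -/
def wasserstein {n : ℕ} (p : ℝ) (μ ν : Measure (En n)) : ℝ :=
  ((⨅ (π' : Measure (En n × En n)) (_ : IsCoupling π' μ ν),
      ∫⁻ z, ENNReal.ofReal (‖z.1 - z.2‖ ^ p) ∂π') ^ (1 / p)).toReal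

/-- Deficit of Talagrand's inequality, `δ_Tal(μ) = 2H(μ) − W₂²(μ,γ)` for `dμ = f dγ`. -/
def talDeficit {n : ℕ} (f : En n → ℝ) : ℝ :=
  2 * relEnt f - wasserstein 2 (densMeasure f) (stdGauss n) ^ 2

/-- The `L^p(dμ)` norm of a real function. -/
def LpNorm {n : ℕ} (p : ℝ) (μ : Measure (En n)) (u : En n → ℝ) : ℝ :=
  (∫ x, |u x| ^ p ∂μ) ^ (1 / p)

open ProbabilityTheory hiding moment
open GaussianFourier
open scoped RealInnerProductSpace ENNReal

/-! ### The standard Gaussian and its translates -/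

lemma isFiniteMeasure_stdGauss (n : ℕ) : IsFiniteMeasure (stdGauss n) := by
  refine isFiniteMeasure_withDensity_ofReal ?_
  have h := (integrable_cexp_neg_mul_sq_norm_add (V := En n) (b := 1 / 2) (by norm_num) 0 0).norm
  refine (Integrable.const_mul ?_ _).2
  refine h.congr (ae_of_all _ fun x => ?_)
  simp [Complex.norm_exp]
  norm_cast
  ring_nf

/-- Both measures have characteristic function `exp(-|t|²/2)`. -/
lemma stdGauss_eq (n : ℕ) : stdGauss n = stdGaussian (En n) := by
  have := isFiniteMeasure_stdGauss n
  apply Measure.ext_of_charFun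
  ext t
  rw [charFun_stdGaussian, charFun_apply, stdGauss,
    integral_withDensity_eq_integral_toReal_smul (by fun_prop) (by simp)]
  have h := integral_cexp_neg_mul_sq_norm_add (V := En n) (b := 1 / 2) (by norm_num) Complex.I t
  have hp : (0:ℝ) ≤ 2 * π := by positivity
  have h2 : ∀ x : En n, (ENNReal.ofReal ((2 * π) ^ (-(n : ℝ) / 2) * Real.exp (-‖x‖ ^ 2 / 2))).toReal •
      Complex.exp (⟪x, t⟫ * Complex.I) = ((2 * π : ℝ) ^ (-(n : ℝ) / 2) : ℝ) *
       Complex.exp (-(1 / 2) * ‖x‖ ^ 2 + Complex.I * ⟪t, x⟫) := by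
    intro x
    rw [ENNReal.toReal_ofReal (by positivity), Complex.real_smul, Complex.ofReal_mul, mul_assoc,
      Complex.ofReal_exp, ← Complex.exp_add, real_inner_comm]
    congr 2
    push_cast
    ring
  simp_rw [h2]
  rw [integral_const_mul, h, ← mul_assoc]
  have h3 : ((2 * π : ℝ) ^ (-(n : ℝ) / 2) : ℝ) * (π / (1 / 2) : ℂ) ^ (Module.finrank ℝ (En n) / 2 : ℂ) = 1 := by
    rw [finrank_euclideanSpace_fin]
    have : (π / (1 / 2) : ℂ) ^ ((n:ℂ) / 2 : ℂ) = (((2 * π : ℝ) ^ ((n : ℝ) / 2) : ℝ) : ℂ) := by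
      rw [Complex.ofReal_cpow hp]
      push_cast
      ring_nf
    rw [this, ← Complex.ofReal_mul, ← Real.rpow_add (by positivity)]
    simp [neg_div]
  rw [h3, one_mul]
  congr 1
  simp only [Complex.I_sq]
  ring

instance (n : ℕ) : IsGaussian (stdGauss n) := by
  rw [stdGauss_eq]; infer_instance

lemma integral_inner_stdGauss {n : ℕ} (v : En n) : ∫ x, ⟪v, x⟫ ∂(stdGauss n) = 0 := by
  rw [stdGauss_eq]; exact integral_strongDual_stdGaussian (innerSL ℝ v)

lemma integrable_norm_pow_stdGauss {n : ℕ} (k : ℕ) (hk : k ≠ 0) :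
    Integrable (fun x => ‖x‖ ^ k) (stdGauss n) := by
  have h := IsGaussian.memLp_id (stdGauss n) k (by simp)
  exact h.integrable_norm_pow hk

lemma integrable_inner_stdGauss {n : ℕ} (v : En n) :
    Integrable (fun x => ⟪v, x⟫) (stdGauss n) :=
  (IsGaussian.integrable_id (μ := stdGauss n)).const_inner v

lemma integral_norm_sq_stdGauss (n : ℕ) : ∫ x, ‖x‖ ^ 2 ∂(stdGauss n) = n := by
  have hL : ∀ i : Fin n, MemLp (fun x : En n => x i) 2 (stdGauss n) := fun i =>
    (IsGaussian.memLp_two_id (μ := stdGauss n)).of_le (by fun_prop)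
      (ae_of_all _ fun x => PiLp.norm_apply_le x i)
  simp_rw [EuclideanSpace.real_norm_sq_eq]
  rw [integral_finsetSum _ fun i _ => (hL i).integrable_sq]
  have : ∀ i : Fin n, ∫ x : En n, x i ^ 2 ∂(stdGauss n) = 1 := by
    intro i
    have h := variance_dual_stdGaussian (innerSL ℝ (EuclideanSpace.single i (1:ℝ)))
    rw [← stdGauss_eq, variance_of_integral_eq_zero] at h
    · simpa [PiLp.inner_apply] using h
    · exact (ContinuousLinearMap.continuous _).aemeasurable
    · exact integral_inner_stdGauss _
  simp [this]

/-- The density `exp(⟨v,x⟩ - |v|²/2)` of the translate of `γ` by `v`. -/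
def tilt {n : ℕ} (v x : En n) : ℝ := Real.exp (⟪v, x⟫ - ‖v‖ ^ 2 / 2)

lemma measurable_tilt {n : ℕ} (v : En n) : Measurable (tilt v) := by
  unfold tilt; fun_prop

/-- Cameron–Martin for the standard Gaussian, by completing the square. -/
lemma densMeasure_tilt {n : ℕ} (v : En n) :
    densMeasure (tilt v) = (stdGauss n).map (fun x => x + v) := by
  have hm := measurable_tilt v
  ext s hs
  rw [Measure.map_apply (by fun_prop) hs, densMeasure, withDensity_apply _ hs, stdGauss,
    setLIntegral_withDensity_eq_setLIntegral_mul _ (by fun_prop) (by fun_prop) hs,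
    withDensity_apply _ (measurableSet_preimage (by fun_prop) hs),
    ← lintegral_indicator hs, ← lintegral_indicator (measurableSet_preimage (by fun_prop) hs),
    ← lintegral_add_right_eq_self _ v]
  refine lintegral_congr fun x => ?_
  by_cases hx : x + v ∈ s
  · rw [Set.indicator_of_mem hx, Set.indicator_of_mem (by exact hx), Pi.mul_apply,
      ← ENNReal.ofReal_mul (by positivity), mul_assoc, tilt, ← Real.exp_add]
    congr 3
    rw [norm_add_sq_real, inner_add_right, real_inner_self_eq_norm_sq, real_inner_comm]
    ring
  · rw [Set.indicator_of_notMem hx, Set.indicator_of_notMem (by exact hx)]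

lemma integrable_tilt_smul {n : ℕ} (v : En n) {φ : En n → ℝ}
    (hφ : Measurable φ) (h : Integrable (fun x => φ (x + v)) (stdGauss n)) :
    Integrable (fun x => tilt v x * φ x) (stdGauss n) := by
  have h1 : Integrable φ (densMeasure (tilt v)) := by
    rw [densMeasure_tilt, integrable_map_measure hφ.aestronglyMeasurable (by fun_prop)]
    exact h
  rw [densMeasure, integrable_withDensity_iff_integrable_smul'
    (by have := measurable_tilt v; fun_prop) (by simp)] at h1
  refine h1.congr (ae_of_all _ fun x => ?_)
  simp [ENNReal.toReal_ofReal, tilt, Real.exp_nonneg]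

lemma integral_tilt_smul {n : ℕ} (v : En n) {φ : En n → ℝ} (hφ : Measurable φ) :
    ∫ x, tilt v x * φ x ∂(stdGauss n) = ∫ x, φ (x + v) ∂(stdGauss n) := by
  have h1 : ∫ x, φ x ∂(densMeasure (tilt v)) = ∫ x, φ (x + v) ∂(stdGauss n) := by
    rw [densMeasure_tilt, integral_map (by fun_prop) hφ.aestronglyMeasurable]
  rw [← h1, densMeasure, integral_withDensity_eq_integral_toReal_smul
    (by have := measurable_tilt v; fun_prop) (by simp)]
  refine integral_congr_ae (ae_of_all _ fun x => ?_)
  simp [ENNReal.toReal_ofReal, tilt, Real.exp_nonneg]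

/-! ### The mixture: mass, barycenter and second moment -/

/-- The density of the mixture `(1-ε)γ + (ε/2)γ_v + (ε/2)γ_{-v}`. -/
def mixDens {n : ℕ} (ε : ℝ) (v x : En n) : ℝ :=
  (1 - ε) + ε / 2 * tilt v x + ε / 2 * tilt (-v) x

lemma tilt_pos {n : ℕ} (v x : En n) : 0 < tilt v x := Real.exp_pos _

lemma mixDens_nonneg {n : ℕ} {ε : ℝ} (h0 : 0 ≤ ε) (h1 : ε ≤ 1) (v x : En n) :
    0 ≤ mixDens ε v x := by
  have := tilt_pos v x
  have := tilt_pos (-v) x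
  have : 0 ≤ 1 - ε := by linarith
  unfold mixDens; positivity

lemma measurable_mixDens {n : ℕ} (ε : ℝ) (v : En n) : Measurable (mixDens ε v) := by
  have := measurable_tilt v
  have := measurable_tilt (-v)
  unfold mixDens; fun_prop

lemma densMeasure_mixDens {n : ℕ} {ε : ℝ} (h0 : 0 ≤ ε) (h1 : ε ≤ 1) (v : En n) :
    densMeasure (mixDens ε v) = ENNReal.ofReal (1 - ε) • stdGauss n
      + ENNReal.ofReal (ε / 2) • (stdGauss n).map (fun x => x + v)
      + ENNReal.ofReal (ε / 2) • (stdGauss n).map (fun x => x + -v) := by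
  have h : (fun x => ENNReal.ofReal (mixDens ε v x)) = (fun _ => ENNReal.ofReal (1 - ε))
      + ENNReal.ofReal (ε / 2) • (fun x => ENNReal.ofReal (tilt v x))
      + ENNReal.ofReal (ε / 2) • (fun x => ENNReal.ofReal (tilt (-v) x)) := by
    ext x
    have := tilt_pos v x
    have := tilt_pos (-v) x
    have : 0 ≤ 1 - ε := by linarith
    simp only [Pi.add_apply, Pi.smul_apply, smul_eq_mul, mixDens]
    rw [ENNReal.ofReal_add (by positivity) (by positivity), ENNReal.ofReal_add (by positivity)
      (by positivity), ENNReal.ofReal_mul (by positivity), ENNReal.ofReal_mul (by positivity)]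
  have m1 := measurable_tilt v
  have m2 := measurable_tilt (-v)
  rw [← densMeasure_tilt, ← densMeasure_tilt, densMeasure, h,
    withDensity_add_right _ (by fun_prop), withDensity_add_right _ (by fun_prop),
    withDensity_const, withDensity_smul _ (by fun_prop), withDensity_smul _ (by fun_prop)]
  rfl

lemma isProbabilityMeasure_mix {Ω : Type*} [MeasurableSpace Ω] {ε : ℝ} (h0 : 0 ≤ ε) (h1 : ε ≤ 1)
    (μ₀ μ₁ μ₂ : Measure Ω) [IsProbabilityMeasure μ₀] [IsProbabilityMeasure μ₁]
    [IsProbabilityMeasure μ₂] :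
    IsProbabilityMeasure (ENNReal.ofReal (1 - ε) • μ₀ + ENNReal.ofReal (ε / 2) • μ₁
      + ENNReal.ofReal (ε / 2) • μ₂) := by
  constructor
  simp only [Measure.add_apply, Measure.smul_apply, measure_univ, smul_eq_mul, mul_one]
  have : 0 ≤ 1 - ε := by linarith
  rw [← ENNReal.ofReal_add (by positivity) (by positivity),
    ← ENNReal.ofReal_add (by positivity) (by positivity), ← ENNReal.ofReal_one]
  congr 1; ring

instance {n : ℕ} (v : En n) : IsProbabilityMeasure ((stdGauss n).map (fun x => x + v)) :=
  Measure.isProbabilityMeasure_map (by fun_prop)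

lemma isProbabilityMeasure_mixDens {n : ℕ} {ε : ℝ} (h0 : 0 ≤ ε) (h1 : ε ≤ 1) (v : En n) :
    IsProbabilityMeasure (densMeasure (mixDens ε v)) := by
  rw [densMeasure_mixDens h0 h1]
  exact isProbabilityMeasure_mix h0 h1 _ _ _

lemma integrable_mixDens {n : ℕ} {ε : ℝ} (h0 : 0 ≤ ε) (h1 : ε ≤ 1) (v : En n)
    {F : Type*} [NormedAddCommGroup F] {φ : En n → F}
    (hm : StronglyMeasurable φ) (hi : ∀ w, Integrable (fun x => φ (x + w)) (stdGauss n)) :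
    Integrable φ (densMeasure (mixDens ε v)) := by
  rw [densMeasure_mixDens h0 h1]
  have h : ∀ w, Integrable φ ((stdGauss n).map (fun x => x + w)) := fun w => by
    rw [integrable_map_measure hm.aestronglyMeasurable (by fun_prop)]
    exact hi w
  have hz : Integrable φ (stdGauss n) := by simpa using hi 0
  exact ((hz.smul_measure (by simp)).add_measure ((h v).smul_measure (by simp))).add_measure
    ((h (-v)).smul_measure (by simp))

lemma integral_mixDens {n : ℕ} {ε : ℝ} (h0 : 0 ≤ ε) (h1 : ε ≤ 1) (v : En n)
    {F : Type*} [NormedAddCommGroup F] [NormedSpace ℝ F] {φ : En n → F}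
    (hm : StronglyMeasurable φ) (hi : ∀ w, Integrable (fun x => φ (x + w)) (stdGauss n)) :
    ∫ x, φ x ∂(densMeasure (mixDens ε v)) = (1 - ε) • ∫ x, φ x ∂(stdGauss n)
      + (ε / 2) • ∫ x, φ (x + v) ∂(stdGauss n) + (ε / 2) • ∫ x, φ (x + -v) ∂(stdGauss n) := by
  rw [densMeasure_mixDens h0 h1]
  have h : ∀ w, Integrable φ ((stdGauss n).map (fun x => x + w)) := fun w => by
    rw [integrable_map_measure hm.aestronglyMeasurable (by fun_prop)]
    exact hi w
  have hz : Integrable φ (stdGauss n) := by simpa using hi 0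
  rw [integral_add_measure ((hz.smul_measure (by simp)).add_measure
      ((h v).smul_measure (by simp))) ((h (-v)).smul_measure (by simp)),
    integral_add_measure (hz.smul_measure (by simp)) ((h v).smul_measure (by simp)),
    integral_smul_measure, integral_smul_measure, integral_smul_measure,
    integral_map (by fun_prop) hm.aestronglyMeasurable,
    integral_map (by fun_prop) hm.aestronglyMeasurable,
    ENNReal.toReal_ofReal (by linarith), ENNReal.toReal_ofReal (by linarith)]

lemma integrable_self_stdGauss (n : ℕ) : Integrable (fun x => x) (stdGauss n) :=
  IsGaussian.integrable_id

lemma isCentered_mixDens {n : ℕ} {ε : ℝ} (h0 : 0 ≤ ε) (h1 : ε ≤ 1) (v : En n) :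
    IsCentered (densMeasure (mixDens ε v)) := by
  have hz := integrable_self_stdGauss n
  have h : ∫ x, x ∂(stdGauss n) = 0 := by rw [stdGauss_eq]; exact integral_id_stdGaussian
  rw [IsCentered, integral_mixDens (φ := fun x => x) h0 h1 v stronglyMeasurable_id
    (fun w => hz.add (integrable_const w)), h,
    integral_add hz (integrable_const _), integral_add hz (integrable_const _), h]
  simp

lemma norm_add_sq_integral {n : ℕ} (w : En n) :
    Integrable (fun x => ‖x + w‖ ^ 2) (stdGauss n) ∧
      ∫ x, ‖x + w‖ ^ 2 ∂(stdGauss n) = n + ‖w‖ ^ 2 := by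
  have e : (fun x : En n => ‖x + w‖ ^ 2) = fun x => ‖x‖ ^ 2 + 2 * ⟪w, x⟫ + ‖w‖ ^ 2 := by
    ext x; rw [norm_add_sq_real, real_inner_comm]
  have i1 := integrable_norm_pow_stdGauss (n := n) 2 two_ne_zero
  have i2 := (integrable_inner_stdGauss w).const_mul 2
  rw [e]
  refine ⟨(i1.add i2).add (integrable_const _), ?_⟩
  rw [integral_add (by exact i1.add i2) (integrable_const _), integral_add i1 i2,
    integral_norm_sq_stdGauss, integral_const_mul, integral_inner_stdGauss]
  simp

lemma moment_mixDens {n : ℕ} {ε : ℝ} (h0 : 0 ≤ ε) (h1 : ε ≤ 1) (v : En n) :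
    moment 2 (densMeasure (mixDens ε v)) = n + ε * ‖v‖ ^ 2 := by
  simp only [moment, Real.rpow_two]
  rw [integral_mixDens (φ := fun x => ‖x‖ ^ 2) h0 h1 v (continuous_norm.pow 2).stronglyMeasurable
    (fun w => (norm_add_sq_integral w).1),
    (norm_add_sq_integral _).2, (norm_add_sq_integral _).2, integral_norm_sq_stdGauss]
  simp only [norm_neg, smul_eq_mul]
  ring

/-! ### Entropy of the mixture -/

lemma tilt_mul_log {n : ℕ} (w : En n) (a : ℝ) :
    Integrable (fun x => tilt w x * (a + Real.log (tilt w x))) (stdGauss n) ∧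
      ∫ x, tilt w x * (a + Real.log (tilt w x)) ∂(stdGauss n) = a + ‖w‖ ^ 2 / 2 := by
  have hm : Measurable (fun x => a + Real.log (tilt w x)) := by
    have := measurable_tilt w
    fun_prop
  have e : (fun x => a + Real.log (tilt w (x + w))) = fun x => ⟪w, x⟫ + (a + ‖w‖ ^ 2 / 2) := by
    ext x
    rw [tilt, Real.log_exp, inner_add_right, real_inner_self_eq_norm_sq]; ring
  have hi := integrable_inner_stdGauss w
  refine ⟨integrable_tilt_smul w hm ?_, ?_⟩
  · rw [e]; exact hi.add (integrable_const _)
  · rw [integral_tilt_smul w hm, e, integral_add hi (integrable_const _), integral_inner_stdGauss]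
    simp

/-- Pointwise convexity of `t ↦ t log t`; the component with density `1` contributes `0`. The
summands `0 +` match the shape of `tilt_mul_log`. -/
lemma mixDens_mul_log_le {n : ℕ} {ε : ℝ} (h0 : 0 ≤ ε) (h1 : ε ≤ 1) (v x : En n) :
    mixDens ε v x * Real.log (mixDens ε v x) ≤
      ε / 2 * (tilt v x * (0 + Real.log (tilt v x)))
        + ε / 2 * (tilt (-v) x * (0 + Real.log (tilt (-v) x))) := by
  have hc := Real.convexOn_mul_log
  have p1 := (tilt_pos v x).le
  have p2 := (tilt_pos (-v) x).le
  have h := hc.2 (show (1 : ℝ) ∈ Set.Ici 0 by simp)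
    (show (1 / 2 : ℝ) • tilt v x + (1 / 2 : ℝ) • tilt (-v) x ∈ Set.Ici 0 by
      simp only [smul_eq_mul, Set.mem_Ici]; positivity)
    (show 0 ≤ 1 - ε by linarith) h0 (by ring)
  have h' := hc.2 p1 p2 (show (0 : ℝ) ≤ 1 / 2 by norm_num) (show (0 : ℝ) ≤ 1 / 2 by norm_num)
    (by norm_num)
  have e : mixDens ε v x =
      (1 - ε) • (1 : ℝ) + ε • ((1 / 2 : ℝ) • tilt v x + (1 / 2 : ℝ) • tilt (-v) x) := by
    simp only [smul_eq_mul, mixDens]; ring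
  rw [e]
  refine h.trans ?_
  have h2 := mul_le_mul_of_nonneg_left h' h0
  simp only [smul_eq_mul, Real.log_one] at h2 ⊢
  linarith

/-- On each component, `log` of the mixture is at least `log` of the weighted
density of that component. -/
lemma le_mixDens_mul_log {n : ℕ} {ε : ℝ} (h0 : 0 < ε) (h1 : ε < 1) (v x : En n) :
    (1 - ε) * Real.log (1 - ε) + (ε / 2 * (tilt v x * (Real.log (ε / 2) + Real.log (tilt v x)))
        + ε / 2 * (tilt (-v) x * (Real.log (ε / 2) + Real.log (tilt (-v) x)))) ≤
      mixDens ε v x * Real.log (mixDens ε v x) := by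
  have p1 := tilt_pos v x
  have p2 := tilt_pos (-v) x
  have p0 : 0 < 1 - ε := by linarith
  have q1 : 0 < ε / 2 * tilt v x := by positivity
  have q2 : 0 < ε / 2 * tilt (-v) x := by positivity
  have l0 := Real.log_le_log p0 (show 1 - ε ≤ mixDens ε v x by unfold mixDens; linarith)
  have l1 := Real.log_le_log q1 (show _ ≤ mixDens ε v x by unfold mixDens; linarith)
  have l2 := Real.log_le_log q2 (show _ ≤ mixDens ε v x by unfold mixDens; linarith)
  rw [Real.log_mul (by positivity) (by positivity)] at l1 l2
  have := mul_le_mul_of_nonneg_left l0 p0.le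
  have := mul_le_mul_of_nonneg_left l1 q1.le
  have := mul_le_mul_of_nonneg_left l2 q2.le
  have e : mixDens ε v x * Real.log (mixDens ε v x) = (1 - ε) * Real.log (mixDens ε v x)
      + ε / 2 * tilt v x * Real.log (mixDens ε v x)
      + ε / 2 * tilt (-v) x * Real.log (mixDens ε v x) := by
    nth_rewrite 1 [mixDens]; ring
  rw [e]
  linarith

lemma relEnt_mixDens_bounds {n : ℕ} {ε : ℝ} (h0 : 0 < ε) (h1 : ε < 1) (v : En n) :
    (1 - ε) * Real.log (1 - ε) + ε * Real.log (ε / 2) + ε * ‖v‖ ^ 2 / 2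
        ≤ relEnt (mixDens ε v) ∧
      relEnt (mixDens ε v) ≤ ε * ‖v‖ ^ 2 / 2 := by
  have A : ∀ a : ℝ, Integrable (fun x => ε / 2 * (tilt v x * (a + Real.log (tilt v x)))
        + ε / 2 * (tilt (-v) x * (a + Real.log (tilt (-v) x)))) (stdGauss n) ∧
      ∫ x, (ε / 2 * (tilt v x * (a + Real.log (tilt v x)))
        + ε / 2 * (tilt (-v) x * (a + Real.log (tilt (-v) x)))) ∂(stdGauss n)
        = ε * (a + ‖v‖ ^ 2 / 2) := by
    intro a
    have i1 := (tilt_mul_log v a).1.const_mul (ε / 2)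
    have i2 := (tilt_mul_log (-v) a).1.const_mul (ε / 2)
    refine ⟨i1.add i2, ?_⟩
    rw [integral_add i1 i2, integral_const_mul, integral_const_mul, (tilt_mul_log v a).2,
      (tilt_mul_log (-v) a).2, norm_neg]
    ring
  obtain ⟨iu, eu⟩ := A 0
  obtain ⟨il, el⟩ := A (Real.log (ε / 2))
  have il' := (integrable_const (μ := stdGauss n) ((1 - ε) * Real.log (1 - ε))).add il
  have hm : AEStronglyMeasurable (fun x => mixDens ε v x * Real.log (mixDens ε v x))
      (stdGauss n) := by
    have := measurable_mixDens ε v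
    exact Measurable.aestronglyMeasurable (by fun_prop)
  have hi : Integrable (fun x => mixDens ε v x * Real.log (mixDens ε v x)) (stdGauss n) :=
    integrable_of_le_of_le hm (ae_of_all _ (le_mixDens_mul_log h0 h1 v))
      (ae_of_all _ (mixDens_mul_log_le h0.le h1.le v)) il' iu
  constructor
  · have := integral_mono il' hi (le_mixDens_mul_log h0 h1 v)
    simp only [Pi.add_apply] at this
    rw [integral_add (integrable_const _) il, el] at this
    simp only [integral_const, probReal_univ, smul_eq_mul, one_mul] at this
    unfold relEnt
    linarith
  · have := integral_mono hi iu (mixDens_mul_log_le h0.le h1.le v)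
    rw [eu] at this
    unfold relEnt
    linarith

/-! ### Transport cost of the mixture -/

/-- The squared Wasserstein cost `W₂²` as an extended nonnegative number. -/
def costSq {n : ℕ} (μ ν : Measure (En n)) : ℝ≥0∞ :=
  ⨅ (π' : Measure (En n × En n)) (_ : IsCoupling π' μ ν),
    ∫⁻ z, ENNReal.ofReal (‖z.1 - z.2‖ ^ (2 : ℝ)) ∂π'

lemma wasserstein_two_eq {n : ℕ} (μ ν : Measure (En n)) :
    wasserstein 2 μ ν = √(costSq μ ν).toReal := by
  rw [Real.sqrt_eq_rpow, ENNReal.toReal_rpow]; rfl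

lemma wasserstein_two_sq {n : ℕ} (μ ν : Measure (En n)) :
    wasserstein 2 μ ν ^ 2 = (costSq μ ν).toReal := by
  rw [wasserstein_two_eq, Real.sq_sqrt ENNReal.toReal_nonneg]

/-- Each component of the mixture is transported onto `γ` by undoing its translation. -/
lemma costSq_mixDens_le {n : ℕ} {ε : ℝ} (h0 : 0 ≤ ε) (h1 : ε ≤ 1) (v : En n) :
    costSq (densMeasure (mixDens ε v)) (stdGauss n) ≤ ENNReal.ofReal (ε * ‖v‖ ^ 2) := by
  have hp : ∀ w : En n, IsProbabilityMeasure ((stdGauss n).map (fun x => (x + w, x))) :=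
    fun w => Measure.isProbabilityMeasure_map (by fun_prop)
  have hf : ∀ w : En n, ((stdGauss n).map (fun x => (x + w, x))).map Prod.fst
      = (stdGauss n).map (fun x => x + w) := fun w => by
    rw [Measure.map_map (by fun_prop) (by fun_prop)]; rfl
  have hs : ∀ w : En n, ((stdGauss n).map (fun x => (x + w, x))).map Prod.snd
      = stdGauss n := fun w => by
    rw [Measure.map_map (by fun_prop) (by fun_prop)]; exact Measure.map_id
  have hcost : ∀ w : En n, ∫⁻ z, ENNReal.ofReal (‖z.1 - z.2‖ ^ (2 : ℝ))
      ∂((stdGauss n).map (fun x => (x + w, x))) = ENNReal.ofReal (‖w‖ ^ 2) := fun w => by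
    rw [lintegral_map (by fun_prop) (by fun_prop)]; simp
  have hcoup : IsCoupling (ENNReal.ofReal (1 - ε) • (stdGauss n).map (fun x => (x + 0, x))
      + ENNReal.ofReal (ε / 2) • (stdGauss n).map (fun x => (x + v, x))
      + ENNReal.ofReal (ε / 2) • (stdGauss n).map (fun x => (x + -v, x)))
      (densMeasure (mixDens ε v)) (stdGauss n) := by
    refine ⟨?_, ?_, ?_⟩
    · have := hp 0
      have := hp v
      have := hp (-v)
      exact isProbabilityMeasure_mix h0 h1 _ _ _
    · rw [Measure.map_add _ _ measurable_fst, Measure.map_add _ _ measurable_fst,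
        Measure.map_smul, Measure.map_smul, Measure.map_smul, hf, hf, hf, densMeasure_mixDens h0 h1]
      simp
    · rw [Measure.map_add _ _ measurable_snd, Measure.map_add _ _ measurable_snd,
        Measure.map_smul, Measure.map_smul, Measure.map_smul, hs, hs, hs, ← add_smul, ← add_smul,
        ← ENNReal.ofReal_add (by linarith) (by linarith),
        ← ENNReal.ofReal_add (by linarith) (by linarith)]
      have : 1 - ε + ε / 2 + ε / 2 = 1 := by ring
      simp [this]
  refine iInf₂_le_of_le _ hcoup ?_
  rw [lintegral_add_measure, lintegral_add_measure, lintegral_smul_measure,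
    lintegral_smul_measure, lintegral_smul_measure, hcost, hcost, hcost]
  simp only [smul_eq_mul, norm_neg]
  rw [← ENNReal.ofReal_mul (by linarith), ← ENNReal.ofReal_mul (by linarith),
    ← ENNReal.ofReal_add (by simp) (by positivity),
    ← ENNReal.ofReal_add (by simp; positivity) (by positivity)]
  apply ENNReal.ofReal_le_ofReal
  simp
  linarith

/-- A 1-Lipschitz observable `S` bounds the transport cost from below, since
`(s-t)² ≥ (1-d)s² - t²/d`. -/
lemma le_costSq {n : ℕ} {μ ν : Measure (En n)} (S : En n → ℝ) (hS : Measurable S)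
    (hL : ∀ x y, |S x - S y| ≤ ‖x - y‖) (hμ : Integrable (fun x => S x ^ 2) μ)
    (hν : Integrable (fun x => S x ^ 2) ν) {d : ℝ} (hd : 0 < d) :
    ENNReal.ofReal ((1 - d) * ∫ x, S x ^ 2 ∂μ - (1 / d) * ∫ x, S x ^ 2 ∂ν) ≤ costSq μ ν := by
  refine le_iInf₂ fun ρ ⟨_, h1, h2⟩ => ?_
  have hS2 : Measurable (fun x => S x ^ 2) := by fun_prop
  have i1 : Integrable (fun z : En n × En n => S z.1 ^ 2) ρ := by
    rw [← h1, integrable_map_measure hS2.aestronglyMeasurable (by fun_prop)] at hμ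
    exact hμ
  have i2 : Integrable (fun z : En n × En n => S z.2 ^ 2) ρ := by
    rw [← h2, integrable_map_measure hS2.aestronglyMeasurable (by fun_prop)] at hν
    exact hν
  have e1 : ∫ x, S x ^ 2 ∂μ = ∫ z, S z.1 ^ 2 ∂ρ := by
    rw [← h1, integral_map (by fun_prop) hS2.aestronglyMeasurable]
  have e2 : ∫ x, S x ^ 2 ∂ν = ∫ z, S z.2 ^ 2 ∂ρ := by
    rw [← h2, integral_map (by fun_prop) hS2.aestronglyMeasurable]
  have i3 : Integrable (fun z : En n × En n => (S z.1 - S z.2) ^ 2) ρ := by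
    have hm : AEStronglyMeasurable (fun z : En n × En n => (S z.1 - S z.2) ^ 2) ρ :=
      Measurable.aestronglyMeasurable (by fun_prop)
    refine ((i1.add i2).const_mul 2).mono' hm (ae_of_all _ fun z => ?_)
    rw [Real.norm_eq_abs, abs_of_nonneg (sq_nonneg _), Pi.add_apply]
    linarith [sq_nonneg (S z.1 + S z.2)]
  rw [e1, e2, ← integral_const_mul, ← integral_const_mul,
    ← integral_sub (i1.const_mul _) (i2.const_mul _)]
  calc _ ≤ ENNReal.ofReal (∫ z, (S z.1 - S z.2) ^ 2 ∂ρ) := by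
        refine ENNReal.ofReal_le_ofReal (integral_mono
          ((i1.const_mul _).sub (i2.const_mul _)) i3 fun z => ?_)
        have h : 0 ≤ (d * S z.1 - S z.2) ^ 2 / d := by positivity
        have e : (d * S z.1 - S z.2) ^ 2 / d
            = d * S z.1 ^ 2 - 2 * S z.1 * S z.2 + 1 / d * S z.2 ^ 2 := by
          field_simp; ring
        linarith [sq_nonneg (S z.2)]
    _ = ∫⁻ z, ENNReal.ofReal ((S z.1 - S z.2) ^ 2) ∂ρ :=
        ofReal_integral_eq_lintegral_ofReal i3 (ae_of_all _ fun z => sq_nonneg _)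
    _ ≤ _ := by
        refine lintegral_mono fun z => ENNReal.ofReal_le_ofReal ?_
        rw [Real.rpow_two, ← sq_abs]
        exact pow_le_pow_left₀ (abs_nonneg _) (hL _ _) 2

/-- The soft threshold of `⟨e,x⟩` at level `R`: it nearly vanishes on `γ` but still sees
the far translates. -/
def softThr {n : ℕ} (e : En n) (R : ℝ) (x : En n) : ℝ := max (|⟪e, x⟫| - R) 0

/-- The bound `le_costSq` for `softThr e R`: under `γ` its square has integral at most
`∫ |x|⁴ dγ / R²`, and under `γ_{±ae}` at least `(a-R)²`. -/
lemma costSq_mixDens_ge {n : ℕ} {ε : ℝ} (h0 : 0 ≤ ε) (h1 : ε ≤ 1) {e : En n} (he : ‖e‖ = 1)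
    {a R d : ℝ} (hR : 0 < R) (hRa : R ≤ a) (hd : 0 < d) (hd1 : d ≤ 1) :
    ENNReal.ofReal ((1 - d) * (ε * (a - R) ^ 2)
        - 1 / d * ((∫ x, ‖x‖ ^ 4 ∂(stdGauss n)) / R ^ 2)) ≤
      costSq (densMeasure (mixDens ε (a • e))) (stdGauss n) := by
  set S := softThr e R with hSdef
  have hm : Measurable S := by unfold S softThr; fun_prop
  have habs : ∀ x : En n, |⟪e, x⟫| ≤ ‖x‖ := fun x => by
    simpa [he] using abs_real_inner_le_norm e x
  have hL : ∀ x y, |S x - S y| ≤ ‖x - y‖ := fun x y => by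
    refine (abs_max_sub_max_le_abs _ _ _).trans ?_
    rw [sub_sub_sub_cancel_right]
    refine (abs_abs_sub_abs_le_abs_sub _ _).trans ?_
    rw [← inner_sub_right]
    exact habs _
  have hS0 : ∀ x, 0 ≤ S x := fun x => le_max_right _ _
  have hSn : ∀ x, S x ≤ ‖x‖ := fun x =>
    max_le (by linarith [habs x]) (norm_nonneg _)
  have hi : ∀ w, Integrable (fun x => S (x + w) ^ 2) (stdGauss n) := fun w => by
    refine (norm_add_sq_integral w).1.mono'
      (Measurable.aestronglyMeasurable (by fun_prop)) (ae_of_all _ fun x => ?_)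
    rw [Real.norm_eq_abs, abs_of_nonneg (sq_nonneg _)]
    exact pow_le_pow_left₀ (hS0 _) (hSn _) 2
  have hz : Integrable (fun x => S x ^ 2) (stdGauss n) := by simpa using hi 0
  have hmS : StronglyMeasurable (fun x => S x ^ 2) := Measurable.stronglyMeasurable (by fun_prop)
  have hμ := integrable_mixDens h0 h1 (a • e) hmS hi
  have hγ : ∫ x, S x ^ 2 ∂(stdGauss n) ≤ (∫ x, ‖x‖ ^ 4 ∂(stdGauss n)) / R ^ 2 := by
    rw [← integral_div]
    refine integral_mono hz ((integrable_norm_pow_stdGauss 4 (by norm_num)).div_const _)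
      fun x => ?_
    have hle : S x ≤ ‖x‖ ^ 2 / R := by
      refine max_le ?_ (by positivity)
      rw [le_div_iff₀ hR]
      nlinarith [habs x, sq_nonneg (‖x‖ - R), norm_nonneg x]
    calc S x ^ 2 ≤ (‖x‖ ^ 2 / R) ^ 2 := pow_le_pow_left₀ (hS0 _) hle 2
      _ = ‖x‖ ^ 4 / R ^ 2 := by ring
  -- `s² ≥ 2ts - t²` with `t = a - R` and `s ≥ ±⟨e,x⟩ - R` give an affine minorant, whose
  -- Gaussian integral is explicit
  have hsh : ∀ σ : ℝ, |σ| = 1 → (a - R) ^ 2 ≤ ∫ x, S (x + σ • (a • e)) ^ 2 ∂(stdGauss n) := by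
    intro σ hσ
    have hσ2 : σ * σ = 1 := by rw [← abs_mul_abs_self, hσ, one_mul]
    have hii := (integrable_inner_stdGauss e).const_mul (2 * (a - R) * σ)
    have key : ∫ x, (2 * (a - R) * σ * ⟪e, x⟫ + (a - R) ^ 2) ∂(stdGauss n) = (a - R) ^ 2 := by
      rw [integral_add hii (integrable_const _), integral_const_mul, integral_inner_stdGauss]
      simp
    rw [← key]
    refine integral_mono (hii.add (integrable_const _)) (hi _) fun x => ?_
    have hin : ⟪e, x + σ • (a • e)⟫ = ⟪e, x⟫ + σ * a := by
      rw [inner_add_right, real_inner_smul_right, real_inner_smul_right,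
        real_inner_self_eq_norm_sq, he]; ring
    have h3 : σ * ⟪e, x⟫ + a - R ≤ S (x + σ • (a • e)) := by
      refine le_trans ?_ (le_max_left _ _)
      rw [hin]
      have h4 : σ * (⟪e, x⟫ + σ * a) ≤ |⟪e, x⟫ + σ * a| := by
        refine (le_abs_self _).trans ?_
        rw [abs_mul, hσ, one_mul]
      have : σ * (⟪e, x⟫ + σ * a) = σ * ⟪e, x⟫ + a := by
        rw [mul_add, ← mul_assoc, hσ2, one_mul]
      linarith
    have h5 : 0 ≤ a - R := by linarith
    nlinarith [sq_nonneg (S (x + σ • (a • e)) - (a - R)), mul_le_mul_of_nonneg_left h3 h5]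
  have hμ2 : ε * (a - R) ^ 2 ≤ ∫ x, S x ^ 2 ∂(densMeasure (mixDens ε (a • e))) := by
    rw [integral_mixDens h0 h1 (a • e) hmS hi]
    have p := hsh 1 (by simp)
    have q := hsh (-1) (by simp)
    rw [one_smul] at p
    rw [neg_one_smul] at q
    have r : 0 ≤ ∫ x, S x ^ 2 ∂(stdGauss n) := integral_nonneg fun x => sq_nonneg _
    simp only [smul_eq_mul]
    nlinarith [mul_nonneg (sub_nonneg.2 h1) r, mul_le_mul_of_nonneg_left p h0,
      mul_le_mul_of_nonneg_left q h0]
  refine le_trans (ENNReal.ofReal_le_ofReal ?_) (le_costSq S hm hL hμ hz hd)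
  have := mul_le_mul_of_nonneg_left hμ2 (sub_nonneg.2 hd1)
  have := mul_le_mul_of_nonneg_left hγ (show 0 ≤ 1 / d by positivity)
  linarith

/-- `W₂`-instability of Talagrand's transportation inequality on `𝒫₂^M`, `M > n`. -/
theorem talagrand_instability_W2 (n : ℕ) (hn : 1 ≤ n) (M : ℝ) (hM : (n : ℝ) < M) :
    ∃ (c : ℝ) (f : ℕ → En n → ℝ),
      0 < c ∧
      (∀ k x, 0 ≤ f k x) ∧
      (∀ k, IsProbabilityMeasure (densMeasure (f k))) ∧
      (∀ k, IsCentered (densMeasure (f k))) ∧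
      (∀ k, moment 2 (densMeasure (f k)) ≤ M) ∧
      Tendsto (fun k => talDeficit (f k)) atTop (𝓝 0) ∧
      Tendsto (fun k => wasserstein 2 (densMeasure (f k)) (stdGauss n)) atTop (𝓝 c) := by
  obtain ⟨c, hc, hcM⟩ : ∃ c : ℝ, 0 < c ∧ c ^ 2 = M - n :=
    ⟨√(M - n), Real.sqrt_pos.2 (by linarith), Real.sq_sqrt (by linarith)⟩
  set e : En n := EuclideanSpace.single ⟨0, hn⟩ 1 with hedef
  have he : ‖e‖ = 1 := by simp [e]
  set N : ℕ → ℝ := fun k => k + 2 with hN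
  have hN2 : ∀ k, 2 ≤ N k := fun k => by simp [N]
  -- weight `N⁻⁴` at distance `c N²`: the added second moment is `c²` for every `k`
  set ε : ℕ → ℝ := fun k => 1 / N k ^ 4 with hε
  set v : ℕ → En n := fun k => (c * N k ^ 2) • e with hv
  have ε0 : ∀ k, 0 < ε k := fun k => by have := hN2 k; simp only [ε]; positivity
  have ε1 : ∀ k, ε k < 1 := fun k => by
    have := hN2 k
    simp only [ε]
    rw [div_lt_one (by positivity)]
    exact one_lt_pow₀ (by linarith) (by norm_num)
  have hεv : ∀ k, ε k * ‖v k‖ ^ 2 = c ^ 2 := fun k => by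
    have := hN2 k
    simp only [ε, v, norm_smul, he, mul_one, Real.norm_eq_abs, sq_abs]
    field_simp
  have hNinv : Tendsto (fun k => (N k)⁻¹) atTop (𝓝 0) :=
    (tendsto_atTop_add_const_right _ _ tendsto_natCast_atTop_atTop).inv_tendsto_atTop
  have hεlim : Tendsto ε atTop (𝓝 0) := by
    have := hNinv.pow 4
    simpa [ε] using this
  have hW : Tendsto (fun k => (costSq (densMeasure (mixDens (ε k) (v k))) (stdGauss n)).toReal)
      atTop (𝓝 (c ^ 2)) := by
    obtain ⟨C, hC⟩ : ∃ C, ∫ x, ‖x‖ ^ 4 ∂(stdGauss n) = C := ⟨_, rfl⟩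
    have hlow : Tendsto (fun k => (1 - (N k)⁻¹) * (c ^ 2 * (1 - (N k)⁻¹) ^ 2)
        - (N k)⁻¹ * (C / c ^ 2)) atTop (𝓝 (c ^ 2)) := by
      have h1 := hNinv.const_sub 1
      have := (h1.mul ((h1.pow 2).const_mul (c ^ 2))).sub (hNinv.mul_const (C / c ^ 2))
      simpa using this
    refine tendsto_of_tendsto_of_tendsto_of_le_of_le hlow tendsto_const_nhds (fun k => ?_)
      (fun k => ?_)
    · have h2 := hN2 k
      have hfin : costSq (densMeasure (mixDens (ε k) (v k))) (stdGauss n) ≠ ⊤ :=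
        ne_top_of_le_ne_top ENNReal.ofReal_ne_top (costSq_mixDens_le (ε0 k).le (ε1 k).le (v k))
      refine (ENNReal.ofReal_le_iff_le_toReal hfin).1 ?_
      refine le_of_eq_of_le ?_ (costSq_mixDens_ge (ε0 k).le (ε1 k).le he
        (a := c * N k ^ 2) (R := c * N k) (d := (N k)⁻¹) (by positivity) ?_ (by positivity) ?_)
      · rw [hC]
        congr 1
        simp only [ε]
        field_simp
      · exact mul_le_mul_of_nonneg_left (by nlinarith) hc.le
      · exact inv_le_one_of_one_le₀ (by linarith)
    · have := ENNReal.toReal_mono ENNReal.ofReal_ne_top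
        (costSq_mixDens_le (ε0 k).le (ε1 k).le (v k))
      rwa [hεv, ENNReal.toReal_ofReal (sq_nonneg c)] at this
  have hH : Tendsto (fun k => relEnt (mixDens (ε k) (v k))) atTop (𝓝 (c ^ 2 / 2)) := by
    have hlow : Tendsto (fun k => (1 - ε k) * Real.log (1 - ε k)
        + 2 * (ε k / 2 * Real.log (ε k / 2)) + c ^ 2 / 2) atTop (𝓝 (c ^ 2 / 2)) := by
      have hxl := Real.continuous_mul_log
      have A := (hxl.tendsto 1).comp (by simpa using hεlim.const_sub 1)
      have B := (hxl.tendsto 0).comp (by simpa using hεlim.div_const 2)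
      have := (A.add (B.const_mul 2)).add_const (c ^ 2 / 2)
      simpa [Function.comp_def] using this
    refine tendsto_of_tendsto_of_tendsto_of_le_of_le hlow tendsto_const_nhds (fun k => ?_)
      (fun k => ?_)
    · have := (relEnt_mixDens_bounds (ε0 k) (ε1 k) (v k)).1
      rw [hεv] at this
      refine le_trans (le_of_eq ?_) this
      ring
    · have := (relEnt_mixDens_bounds (ε0 k) (ε1 k) (v k)).2
      rwa [hεv] at this
  refine ⟨c, fun k => mixDens (ε k) (v k), hc, fun k x => mixDens_nonneg (ε0 k).le (ε1 k).le _ _,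
    fun k => isProbabilityMeasure_mixDens (ε0 k).le (ε1 k).le _,
    fun k => isCentered_mixDens (ε0 k).le (ε1 k).le _, fun k => ?_, ?_, ?_⟩
  · rw [moment_mixDens (ε0 k).le (ε1 k).le, hεv]
    linarith
  · have := (hH.const_mul 2).sub hW
    simp only [talDeficit, wasserstein_two_sq]
    convert this using 2
    ring
  · simp only [wasserstein_two_eq]
    simpa [Real.sqrt_sq hc.le] using hW.sqrt
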